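/- arXiv:1205.0343 — 2 statements merged into one kernel-verified Lean document; each statement's English description precedes it below -/
import Mathlib

section
/- Let k ≥ 2 and n_1, …, n_k be positive integers, let t be the number of indices i with n_i odd, and let I_1 = {i : n_i = 1}. If t is odd, t ≥ 3, and |I_1| ≤ (2k − t − 1)/2, then the signed domination number of the complete k-partite graph K_{n_1,…,n_k} equals 3. -/
open scoped Classical

/-- The signed domination number of a finite simple graph `G`: the minimum weight of a
function `f : V → {−1, 1}` such that `f(N[v]) ≥ 1` for every vertex `v`. -/
noncomputable def signedDomNum {V : Type*} [Fintype V] (G : SimpleGraph V) : ℤ :=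
  sInf {w : ℤ | ∃ f : V → ℤ, (∀ v, f v = 1 ∨ f v = -1) ∧
    (∀ v, 1 ≤ f v + ∑ u ∈ G.neighborFinset v, f u) ∧ w = ∑ v, f v}

/-- In a complete multipartite graph, a sum over the neighbours of a vertex is the total sum minus
the sum over the part of the vertex. -/
theorem sum_neighborFinset_completeMultipartiteGraph {ι : Type*} [Fintype ι] {V : ι → Type*}
    [∀ i, Fintype (V i)] (f : (Σ i, V i) → ℤ) (v : Σ i, V i)
    [Fintype ((SimpleGraph.completeMultipartiteGraph V).neighborSet v)] :
    ∑ u ∈ (SimpleGraph.completeMultipartiteGraph V).neighborFinset v, f u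
      = ∑ i, ∑ j, f ⟨i, j⟩ - ∑ j, f ⟨v.1, j⟩ := by
  have h : (SimpleGraph.completeMultipartiteGraph V).neighborFinset v
      = Finset.univ.filter fun u => v.1 ≠ u.1 := by
    ext u
    simp [SimpleGraph.completeMultipartiteGraph]
  rw [h, Finset.sum_filter, Fintype.sum_sigma, ← Finset.sum_erase_eq_sub (Finset.mem_univ v.1)]
  refine (Finset.sum_erase _ (by simp)).symm.trans (Finset.sum_congr rfl fun i hi => ?_)
  simp [(Finset.ne_of_mem_erase hi).symm]

/-- A sum of signs has the parity of the number of its terms. -/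
theorem even_sum_sub_card_of_sign {α : Type*} [Fintype α] (f : α → ℤ)
    (hf : ∀ a, f a = 1 ∨ f a = -1) : Even (∑ a, f a - Fintype.card α) := by
  have h : ∑ a, f a - (Fintype.card α : ℤ) = ∑ a, (f a - 1) := by
    simp [Finset.sum_sub_distrib]
  rw [h]
  refine Finset.even_sum _ fun a _ => ?_
  rcases hf a with h | h <;> rw [h] <;> decide

/-- The alternating sum of `n` signs is `1` for odd `n` and `0` for even `n`. -/
theorem sum_fin_neg_one_pow (n : ℕ) :
    ∑ j : Fin n, (-1 : ℤ) ^ (j : ℕ) = if Odd n then 1 else 0 := by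
  rw [Fin.sum_univ_eq_sum_range (fun j => (-1 : ℤ) ^ j), neg_one_geom_sum]
  by_cases h : Even n
  · simp [h, Nat.not_odd_iff_even.mpr h]
  · simp [h, Nat.not_even_iff_odd.mp h]

/-- A complete multipartite graph with an odd number `t ≥ 3` of odd parts has a signed dominating
function of weight `3`. -/
theorem exists_signedDominating_weight_three (k : ℕ) (n : Fin k → ℕ)
    (htodd : Odd (Finset.univ.filter fun i => Odd (n i)).card)
    (ht3 : 3 ≤ (Finset.univ.filter fun i => Odd (n i)).card) :
    ∃ f : (Σ i : Fin k, Fin (n i)) → ℤ, (∀ v, f v = 1 ∨ f v = -1) ∧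
      (∀ v, 1 ≤ f v + ∑ u ∈ (SimpleGraph.completeMultipartiteGraph
        fun i : Fin k => Fin (n i)).neighborFinset v, f u) ∧ 3 = ∑ v, f v := by
  set T := Finset.univ.filter fun i => Odd (n i) with hT
  obtain ⟨m, hm⟩ := htodd
  obtain ⟨B, hBT, hB⟩ := Finset.exists_subset_card_eq (s := T) (n := m - 1) (by omega)
  let s : Fin k → ℤ := fun i => if i ∈ B then -1 else 1
  have hs : ∀ i, s i = 1 ∨ s i = -1 := fun i => by
    by_cases h : i ∈ B <;> simp [s, h]
  let f : (Σ i : Fin k, Fin (n i)) → ℤ := fun v => s v.1 * (-1) ^ (v.2 : ℕ)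
  have hf : ∀ v, f v = 1 ∨ f v = -1 := fun v => by
    rcases hs v.1 with h | h <;> rcases neg_one_pow_eq_or ℤ (v.2 : ℕ) with h' | h' <;>
      simp [f, h, h']
  have hpart : ∀ i, ∑ j, f ⟨i, j⟩ = s i * if Odd (n i) then 1 else 0 := fun i => by
    rw [← sum_fin_neg_one_pow, Finset.mul_sum]
  have hweight : ∑ i, ∑ j, f ⟨i, j⟩ = 3 := by
    have h : ∀ i, ∑ j, f ⟨i, j⟩ = (if i ∈ T then 1 else 0) - 2 * (if i ∈ B then 1 else 0) := by
      intro i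
      rw [hpart]
      by_cases hi : i ∈ B
      · have : Odd (n i) := by simpa [hT] using hBT hi
        simp [s, hi, this, hBT hi]
      · simp [s, hi, hT]
    simp only [h, Finset.sum_sub_distrib, ← Finset.mul_sum, Finset.sum_boole]
    simp only [Finset.filter_univ_mem, hB, hm]
    push_cast [show 1 ≤ m by omega]
    ring
  refine ⟨f, hf, fun v => ?_, by rw [Fintype.sum_sigma, hweight]⟩
  rw [sum_neighborFinset_completeMultipartiteGraph, hweight, hpart]
  have : (s v.1 * if Odd (n v.1) then 1 else 0) ≤ 1 := by
    rcases hs v.1 with h | h <;> rw [h] <;> split_ifs <;> simp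
  rcases hf v with h | h <;> omega

/-- In a complete multipartite graph with an odd number `t` of odd parts and at most
`(2k - t - 1) / 2` singleton parts, every signed dominating function has weight at least `3`. -/
theorem three_le_weight_of_signedDominating (k : ℕ) (hk : 2 ≤ k) (n : Fin k → ℕ)
    (hn : ∀ i, 0 < n i) (htodd : Odd (Finset.univ.filter fun i => Odd (n i)).card)
    (hI : 2 * ((Finset.univ.filter fun i => n i = 1).card : ℤ) ≤
      2 * (k : ℤ) - ((Finset.univ.filter fun i => Odd (n i)).card : ℤ) - 1)
    (f : (Σ i : Fin k, Fin (n i)) → ℤ) (hf : ∀ v, f v = 1 ∨ f v = -1)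
    (hdom : ∀ v, 1 ≤ f v + ∑ u ∈ (SimpleGraph.completeMultipartiteGraph
        fun i : Fin k => Fin (n i)).neighborFinset v, f u) :
    3 ≤ ∑ v, f v := by
  simp only [sum_neighborFinset_completeMultipartiteGraph] at hdom
  have hpar : Odd (∑ v, f v) := by
    have h := even_sum_sub_card_of_sign f hf
    have h' : Odd (∑ i, n i) := (Finset.odd_sum_iff_odd_card_odd n).mpr htodd
    simp only [Fintype.card_sigma, Fintype.card_fin] at h
    have h'' : Odd ((∑ i, n i : ℕ) : ℤ) := by exact_mod_cast h'
    simpa using h.add_odd h''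
  rw [Fintype.sum_sigma] at hpar ⊢
  set w := ∑ i, ∑ j, f ⟨i, j⟩ with hw
  have hpart : ∀ i, ((n i : ℤ) ≤ w ∧ ∑ j, f ⟨i, j⟩ = n i) ∨ ∑ j, f ⟨i, j⟩ ≤ w - 2 := by
    intro i
    by_cases h : ∃ j, f ⟨i, j⟩ = -1
    · obtain ⟨j, hj⟩ := h
      have := hdom ⟨i, j⟩
      rw [hj] at this
      right
      dsimp only at this
      linarith
    · have h1 : ∀ j, f ⟨i, j⟩ = 1 := fun j => (hf _).resolve_right fun hj => h ⟨j, hj⟩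
      have hsum : ∑ j, f ⟨i, j⟩ = n i := by simp [h1]
      have := hdom ⟨i, ⟨0, hn i⟩⟩
      rw [h1] at this
      dsimp only at this
      exact Or.inl ⟨by linarith, hsum⟩
  by_contra hlt
  obtain h1 | h0 : w = 1 ∨ w ≤ 0 := by
    obtain ⟨c, hc⟩ := hpar
    omega
  · have hbound : ∀ i, ∑ j, f ⟨i, j⟩ ≤
        2 * (if n i = 1 then 1 else 0) - 2 + (if Odd (n i) then 1 else 0) := by
      intro i
      have hn' := hn i
      obtain ⟨c, hc⟩ := even_sum_sub_card_of_sign (fun j => f ⟨i, j⟩) fun j => hf _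
      rw [Fintype.card_fin] at hc
      simp only [Nat.odd_iff]
      rcases hpart i with h | h <;> split_ifs <;> omega
    have hle := Finset.sum_le_sum fun i (_ : i ∈ Finset.univ) => hbound i
    simp only [Finset.sum_add_distrib, Finset.sum_sub_distrib, ← Finset.mul_sum,
      Finset.sum_boole, Finset.sum_const, Finset.card_univ, Fintype.card_fin, nsmul_eq_mul] at hle
    linarith
  · have hbound : ∀ i, ∑ j, f ⟨i, j⟩ ≤ w - 2 := fun i => by
      have hn' := hn i
      rcases hpart i with h | h <;> omega
    have hle := Finset.sum_le_sum fun i (_ : i ∈ Finset.univ) => hbound i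
    rw [← hw, Finset.sum_const, Finset.card_univ, Fintype.card_fin, nsmul_eq_mul] at hle
    have hk' : (2 : ℤ) ≤ k := by exact_mod_cast hk
    nlinarith

theorem signedDomNum_eq_three_of_few_singletons
    (k : ℕ) (hk : 2 ≤ k) (n : Fin k → ℕ) (hn : ∀ i, 0 < n i)
    (t : ℕ) (ht : t = (Finset.univ.filter fun i => Odd (n i)).card)
    (htodd : Odd t) (ht3 : 3 ≤ t)
    (hI : 2 * ((Finset.univ.filter fun i => n i = 1).card : ℤ) ≤ 2 * (k : ℤ) - (t : ℤ) - 1) :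
    signedDomNum (SimpleGraph.completeMultipartiteGraph fun i : Fin k => Fin (n i)) = 3 := by
  subst ht
  refine IsLeast.csInf_eq ⟨?_, ?_⟩
  · obtain ⟨f, hf, hdom, hw⟩ := exists_signedDominating_weight_three k n htodd ht3
    exact ⟨f, hf, fun v => by convert hdom v, hw⟩
  · rintro w ⟨f, hf, hdom, rfl⟩
    exact three_le_weight_of_signedDominating k hk n hn htodd hI f hf fun v => by convert hdom v
end

section
/- Let n_1 and n_2 be odd integers with min{n_1, n_2} = 3. Then the signed domination number of the complete bipartite graph K_{n_1,n_2} equals 4. -/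
open scoped Classical

lemma sum_neighborFinset_completeBipartiteGraph_inl {α β : Type*} [Fintype β]
    (a : α) [Fintype ((completeBipartiteGraph α β).neighborSet (Sum.inl a))] (f : α ⊕ β → ℤ) :
    ∑ u ∈ (completeBipartiteGraph α β).neighborFinset (Sum.inl a), f u =
      ∑ b, f (Sum.inr b) := by
  have h : (completeBipartiteGraph α β).neighborFinset (Sum.inl a) =
      Finset.univ.map Function.Embedding.inr := by
    ext u
    cases u <;> simp
  rw [h, Finset.sum_map]
  rfl

lemma sum_neighborFinset_completeBipartiteGraph_inr {α β : Type*} [Fintype α]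
    (b : β) [Fintype ((completeBipartiteGraph α β).neighborSet (Sum.inr b))] (f : α ⊕ β → ℤ) :
    ∑ u ∈ (completeBipartiteGraph α β).neighborFinset (Sum.inr b), f u =
      ∑ a, f (Sum.inl a) := by
  have h : (completeBipartiteGraph α β).neighborFinset (Sum.inr b) =
      Finset.univ.map Function.Embedding.inl := by
    ext u
    cases u <;> simp
  rw [h, Finset.sum_map]
  rfl

lemma odd_sum_of_eq_one_or_neg_one {n : ℕ} (hn : Odd n) (g : Fin n → ℤ)
    (hg : ∀ i, g i = 1 ∨ g i = -1) : Odd (∑ i, g i) := by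
  have hdvd : (2 : ℤ) ∣ ∑ i, (g i - 1) := Finset.dvd_sum fun i _ => by
    rcases hg i with h | h <;> simp [h]
  rw [Finset.sum_sub_distrib] at hdvd
  simp only [Finset.sum_const, Finset.card_univ, Fintype.card_fin, nsmul_eq_mul, mul_one] at hdvd
  rw [Int.odd_iff]
  rw [Nat.odd_iff] at hn
  omega

lemma sum_neg_one_pow_fin_of_odd {n : ℕ} (hn : Odd n) :
    ∑ i : Fin n, (-1 : ℤ) ^ (i : ℕ) = 1 := by
  rw [Fin.sum_univ_eq_sum_range (fun i => (-1 : ℤ) ^ i), neg_one_geom_sum,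
    if_neg (Nat.not_even_iff_odd.mpr hn)]

/-- A signed dominating function on a complete bipartite graph with odd parts of size at least
three has weight at least four. -/
lemma four_le_sum_add_sum {m n : ℕ} (hm : Odd m) (hn : Odd n) (hm3 : 3 ≤ m) (hn3 : 3 ≤ n)
    (a : Fin m → ℤ) (b : Fin n → ℤ) (ha : ∀ i, a i = 1 ∨ a i = -1)
    (hb : ∀ j, b j = 1 ∨ b j = -1) (hab : ∀ i, 1 ≤ a i + ∑ j, b j)
    (hba : ∀ j, 1 ≤ b j + ∑ i, a i) : 4 ≤ ∑ i, a i + ∑ j, b j := by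
  obtain ⟨s, hs⟩ := odd_sum_of_eq_one_or_neg_one hm a ha
  obtain ⟨t, ht⟩ := odd_sum_of_eq_one_or_neg_one hn b hb
  have ha0 := hab ⟨0, by omega⟩
  have hb0 := hba ⟨0, by omega⟩
  have ha1 := ha ⟨0, by omega⟩
  have hb1 := hb ⟨0, by omega⟩
  by_contra! hlt
  have hone : ∀ i, a i = 1 := fun i => by
    have := hab i
    have := ha i
    omega
  have hsum : ∑ i, a i = m := by simp [hone]
  omega

theorem signedDomNum_completeBipartite_min_three
    (n₁ n₂ : ℕ) (h₁ : Odd n₁) (h₂ : Odd n₂) (hmin : min n₁ n₂ = 3) :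
    signedDomNum (completeBipartiteGraph (Fin n₁) (Fin n₂)) = 4 := by
  refine IsLeast.csInf_eq ⟨?_, ?_⟩
  · rcases le_total n₁ n₂ with h | h
    · obtain rfl : n₁ = 3 := by omega
      refine ⟨Sum.elim (fun _ => 1) (fun j => (-1) ^ (j : ℕ)), ?_, ?_, ?_⟩
      · rintro (i | j)
        · simp
        · exact neg_one_pow_eq_or ℤ _
      · rintro (i | j)
        · simp [sum_neighborFinset_completeBipartiteGraph_inl, sum_neg_one_pow_fin_of_odd h₂]
        · rw [sum_neighborFinset_completeBipartiteGraph_inr]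
          rcases neg_one_pow_eq_or ℤ (j : ℕ) with hj | hj <;> simp [hj]
      · simp [sum_neg_one_pow_fin_of_odd h₂]
    · obtain rfl : n₂ = 3 := by omega
      refine ⟨Sum.elim (fun i => (-1) ^ (i : ℕ)) (fun _ => 1), ?_, ?_, ?_⟩
      · rintro (i | j)
        · exact neg_one_pow_eq_or ℤ _
        · simp
      · rintro (i | j)
        · rw [sum_neighborFinset_completeBipartiteGraph_inl]
          rcases neg_one_pow_eq_or ℤ (i : ℕ) with hi | hi <;> simp [hi]
        · simp [sum_neighborFinset_completeBipartiteGraph_inr, sum_neg_one_pow_fin_of_odd h₁]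
      · simp [sum_neg_one_pow_fin_of_odd h₁]
  · rintro w ⟨f, hf, hdom, rfl⟩
    rw [Fintype.sum_sum_type]
    refine four_le_sum_add_sum h₁ h₂ (by omega) (by omega) _ _ (fun i => hf _) (fun j => hf _)
      (fun i => ?_) (fun j => ?_)
    · simpa only [sum_neighborFinset_completeBipartiteGraph_inl] using hdom (Sum.inl i)
    · simpa only [sum_neighborFinset_completeBipartiteGraph_inr] using hdom (Sum.inr j)
end
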